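/- Let N ≥ 2, s ∈ (0,1), and let Ω ⊂ ℝ^N be a bounded Lipschitz domain. For every n ≥ 1, the quantity μ̃_n^{(s)} := inf over n-dimensional linear subspaces A of H̃^s_{Ω,0} ∩ L²₀(Ω) of sup_{u ∈ A, u≠0} (c_{N,s}/2)[u]²_{H^s_{Ω,0}} / ‖u‖²_{L²(Ω)} equals μ_n^{(s)}(Ω), the corresponding min-max value taken over n-dimensional subspaces of the larger space H^s_{Ω,0} ∩ L²₀(Ω). -/

import Mathlib

open MeasureTheory Filter Topology Bornology Set
open scoped ENNReal NNReal

noncomputable section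

namespace FracNeumann

abbrev Euc (N : ℕ) : Type := EuclideanSpace ℝ (Fin N)

/-- The kernel weight `|x - y| ^ (N + 2s)`. -/
def kern (N : ℕ) (s : ℝ) (x y : Euc N) : ℝ := ‖x - y‖ ^ ((N : ℝ) + 2 * s)

/-- The region `ℝ^{2N} \ (Ω^c × Ω^c)`, where `Ω^c := ℝ^N \ closure Ω`. -/
def reg (N : ℕ) (Ω : Set (Euc N)) : Set (Euc N × Euc N) :=
  {q | q.1 ∈ closure Ω ∨ q.2 ∈ closure Ω}

/-- The squared seminorm `[u]_{H^s_{Ω,0}}²`, as an extended real number. -/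
def semiSq (N : ℕ) (s : ℝ) (Ω : Set (Euc N)) (u : Euc N → ℝ) : ℝ≥0∞ :=
  ∫⁻ q in reg N Ω, ENNReal.ofReal ((u q.1 - u q.2) ^ 2 / kern N s q.1 q.2)

/-- `∫_Ω u²`, as an extended real number. -/
def l2sq (N : ℕ) (Ω : Set (Euc N)) (u : Euc N → ℝ) : ℝ≥0∞ :=
  ∫⁻ x in Ω, ENNReal.ofReal ((u x) ^ 2)

/-- Membership in `H^s_{Ω,0}`. -/
def memHs (N : ℕ) (s : ℝ) (Ω : Set (Euc N)) (u : Euc N → ℝ) : Prop :=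
  Measurable u ∧ l2sq N Ω u < ⊤ ∧ semiSq N s Ω u < ⊤

/-- The squared Gagliardo seminorm `[u]_{H^s(Ω)}²`. -/
def semiSqOn (N : ℕ) (s : ℝ) (Ω : Set (Euc N)) (u : Euc N → ℝ) : ℝ≥0∞ :=
  ∫⁻ q in Ω ×ˢ Ω, ENNReal.ofReal ((u q.1 - u q.2) ^ 2 / kern N s q.1 q.2)

/-- Membership in `H^s(Ω)` (for functions defined on all of `ℝ^N`). -/
def memHsOn (N : ℕ) (s : ℝ) (Ω : Set (Euc N)) (u : Euc N → ℝ) : Prop :=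
  Measurable u ∧ l2sq N Ω u < ⊤ ∧ semiSqOn N s Ω u < ⊤

/-- The normalizing constant `c_{N,s}` of the fractional Laplacian. -/
def cNs (N : ℕ) (s : ℝ) : ℝ :=
  (4 : ℝ) ^ s * s * Real.Gamma ((N : ℝ) / 2 + s) /
    (Real.pi ^ ((N : ℝ) / 2) * Real.Gamma (1 - s))

/-- The nonlocal Neumann derivative `𝒩_s u`. -/
def Nneu (N : ℕ) (s : ℝ) (Ω : Set (Euc N)) (u : Euc N → ℝ) (x : Euc N) : ℝ :=
  cNs N s * ∫ y in Ω, (u x - u y) / kern N s x y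

/-- Membership in `H̃^s_{Ω,0}`: members of `H^s_{Ω,0}` with `𝒩_s u = 0` a.e. in `Ω^c`. -/
def memHsTilde (N : ℕ) (s : ℝ) (Ω : Set (Euc N)) (u : Euc N → ℝ) : Prop :=
  memHs N s Ω u ∧ ∀ᵐ x ∂(volume.restrict (closure Ω)ᶜ), Nneu N s Ω u x = 0

/-- The first nontrivial Neumann eigenvalue `μ₁^{(s)}(Ω)`. -/
def mu1 (N : ℕ) (s : ℝ) (Ω : Set (Euc N)) : ℝ :=
  sInf {t : ℝ | ∃ u : Euc N → ℝ, memHs N s Ω u ∧ (∫ x in Ω, (u x) ^ 2) = 1 ∧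
    (∫ x in Ω, u x) = 0 ∧ t = cNs N s / 2 * (semiSq N s Ω u).toReal}

/-- The bilinear form (without the constant). -/
def bform (N : ℕ) (s : ℝ) (Ω : Set (Euc N)) (u v : Euc N → ℝ) : ℝ :=
  ∫ q in reg N Ω, (u q.1 - u q.2) * (v q.1 - v q.2) / kern N s q.1 q.2

/-- First nontrivial eigenfunction: weak solution associated to `μ₁^{(s)}(Ω)`. -/
def IsFirstEigen (N : ℕ) (s : ℝ) (Ω : Set (Euc N)) (u : Euc N → ℝ) : Prop :=
  memHs N s Ω u ∧ ¬ (u =ᵐ[volume.restrict Ω] 0) ∧ (∫ x in Ω, u x) = 0 ∧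
    ∀ v : Euc N → ℝ, memHs N s Ω v →
      cNs N s / 2 * bform N s Ω u v = mu1 N s Ω * ∫ x in Ω, u x * v x

/-- Reflection `σ_e(x) = x - 2(x·e)e` across the hyperplane `{x·e = 0}`. -/
def reflect (N : ℕ) (e x : Euc N) : Euc N := x - (2 * (inner ℝ x e : ℝ)) • e

/-- The polarization `P_e u` with respect to the hyperplane `{x·e = 0}`. -/
def polarize (N : ℕ) (e : Euc N) (u : Euc N → ℝ) (x : Euc N) : ℝ :=
  if 0 ≤ (inner ℝ x e : ℝ) then min (u x) (u (reflect N e x))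
  else max (u x) (u (reflect N e x))

/-- Foliated Schwarz symmetry with respect to `p`. -/
def FoliatedSchwarz (N : ℕ) (p : Euc N) (u : Euc N → ℝ) : Prop :=
  ∃ uh : ℝ → ℝ → ℝ, (∀ r : ℝ, AntitoneOn (uh r) (Icc 0 Real.pi)) ∧
    ∀ x : Euc N, x ≠ 0 → u x = uh ‖x‖ (Real.arccos ((inner ℝ x p : ℝ) / ‖x‖))

/-- Radial symmetry (pointwise). -/
def Radial (N : ℕ) (u : Euc N → ℝ) : Prop := ∃ f : ℝ → ℝ, ∀ x, u x = f ‖x‖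

/-- Radial symmetry (a.e.). -/
def RadialAE (N : ℕ) (u : Euc N → ℝ) : Prop :=
  ∃ f : ℝ → ℝ, ∀ᵐ x : Euc N ∂volume, u x = f ‖x‖

/-- The set `{x ∈ Ω : u x ≠ 0}` has exactly two connected components. -/
def TwoNodal (N : ℕ) (Ω : Set (Euc N)) (u : Euc N → ℝ) : Prop :=
  Nat.card (ConnectedComponents {x : Euc N // x ∈ Ω ∧ u x ≠ 0}) = 2

/-- Bounded Lipschitz domain: open, bounded, connected, and near every boundary point the set
is the region above the graph of a Lipschitz function in some direction `e`. -/
def IsLipschitzDomain (N : ℕ) (Ω : Set (Euc N)) : Prop :=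
  IsOpen Ω ∧ IsBounded Ω ∧ IsConnected Ω ∧
    ∀ x ∈ frontier Ω, ∃ e : Euc N, ‖e‖ = 1 ∧ ∃ r : ℝ, 0 < r ∧
      ∃ (L : NNReal) (f : Euc N → ℝ), LipschitzWith L f ∧
        ∀ y ∈ Metric.ball x r,
          (y ∈ Ω ↔ f (y - ((inner ℝ y e : ℝ)) • e) < (inner ℝ y e : ℝ))

/-- `g` is a weak gradient of `u` in `Ω`, square-integrable on `Ω`. -/
def IsWeakGradient (N : ℕ) (Ω : Set (Euc N)) (u : Euc N → ℝ) (g : Euc N → Euc N) : Prop :=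
  Measurable g ∧ (∫⁻ x in Ω, ENNReal.ofReal (‖g x‖ ^ 2)) < ⊤ ∧
    ∀ φ : Euc N → ℝ, ContDiff ℝ (⊤ : ℕ∞) φ → HasCompactSupport φ → tsupport φ ⊆ Ω →
      ∀ i : Fin N, (∫ x in Ω, u x * fderiv ℝ φ x (EuclideanSpace.single i 1)) =
        - ∫ x in Ω, g x i * φ x

/-- Membership in `H¹(Ω)`. -/
def memH1 (N : ℕ) (Ω : Set (Euc N)) (u : Euc N → ℝ) : Prop :=
  Measurable u ∧ l2sq N Ω u < ⊤ ∧ ∃ g, IsWeakGradient N Ω u g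

/-- `∫_Ω |∇u|²`, as an extended real number. -/
def gradSq (N : ℕ) (Ω : Set (Euc N)) (u : Euc N → ℝ) : ℝ≥0∞ :=
  ⨅ (g : Euc N → Euc N) (_ : IsWeakGradient N Ω u g), ∫⁻ x in Ω, ENNReal.ofReal (‖g x‖ ^ 2)

/-- Rayleigh quotient for the fractional Neumann problem. -/
def rayleighS (N : ℕ) (s : ℝ) (Ω : Set (Euc N)) (u : Euc N → ℝ) : ℝ≥0∞ :=
  ENNReal.ofReal (cNs N s / 2) * semiSq N s Ω u / l2sq N Ω u

/-- Rayleigh quotient for the local Neumann problem. -/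
def rayleigh1 (N : ℕ) (Ω : Set (Euc N)) (u : Euc N → ℝ) : ℝ≥0∞ :=
  gradSq N Ω u / l2sq N Ω u

/-- The min-max value `μ_n^{(s)}(Ω)` over `n`-dimensional subspaces of `H^s_{Ω,0} ∩ L²₀(Ω)`. -/
def muNs (N : ℕ) (s : ℝ) (Ω : Set (Euc N)) (n : ℕ) : ℝ≥0∞ :=
  ⨅ (A : Submodule ℝ (Euc N → ℝ)) (_ : Module.finrank ℝ A = n ∧
      (∀ u ∈ A, memHs N s Ω u ∧ (∫ x in Ω, u x) = 0) ∧
      (∀ u ∈ A, u =ᵐ[(volume : Measure (Euc N))] 0 → u = 0)),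
    ⨆ (u : Euc N → ℝ) (_ : u ∈ A ∧ u ≠ 0), rayleighS N s Ω u

/-- The min-max value over `n`-dimensional subspaces of `H̃^s_{Ω,0} ∩ L²₀(Ω)`. -/
def muNsTilde (N : ℕ) (s : ℝ) (Ω : Set (Euc N)) (n : ℕ) : ℝ≥0∞ :=
  ⨅ (A : Submodule ℝ (Euc N → ℝ)) (_ : Module.finrank ℝ A = n ∧
      (∀ u ∈ A, memHsTilde N s Ω u ∧ (∫ x in Ω, u x) = 0) ∧
      (∀ u ∈ A, u =ᵐ[(volume : Measure (Euc N))] 0 → u = 0)),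
    ⨆ (u : Euc N → ℝ) (_ : u ∈ A ∧ u ≠ 0), rayleighS N s Ω u

/-- The min-max value `μ_n^{(1)}(Ω)` over `n`-dimensional subspaces of `H¹(Ω) ∩ L²₀(Ω)`. -/
def muN1 (N : ℕ) (Ω : Set (Euc N)) (n : ℕ) : ℝ≥0∞ :=
  ⨅ (A : Submodule ℝ (Euc N → ℝ)) (_ : Module.finrank ℝ A = n ∧
      (∀ u ∈ A, memH1 N Ω u ∧ (∫ x in Ω, u x) = 0) ∧
      (∀ u ∈ A, u =ᵐ[volume.restrict Ω] 0 → u = 0)),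
    ⨆ (u : Euc N → ℝ) (_ : u ∈ A ∧ u ≠ 0), rayleigh1 N Ω u

/-- `μ_n^{(s)}(Ω)` including `μ₀^{(s)}(Ω) := 0`. -/
def muNsFull (N : ℕ) (s : ℝ) (Ω : Set (Euc N)) (n : ℕ) : ℝ≥0∞ :=
  if n = 0 then 0 else muNs N s Ω n

/-- `μ_n^{(1)}(Ω)` including `μ₀^{(1)}(Ω) := 0`. -/
def muN1Full (N : ℕ) (Ω : Set (Euc N)) (n : ℕ) : ℝ≥0∞ :=
  if n = 0 then 0 else muN1 N Ω n

/-- The squared `H^s_{Ω,0}`-seminorm of the `s`-minimal extension of `u`: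
the minimal value of `[v]²` over `v ∈ H^s_{Ω,0}` with `v = u` a.e. in `Ω`. -/
def minExtSemiSq (N : ℕ) (s : ℝ) (Ω : Set (Euc N)) (u : Euc N → ℝ) : ℝ≥0∞ :=
  ⨅ (v : Euc N → ℝ) (_ : memHs N s Ω v ∧ v =ᵐ[volume.restrict Ω] u), semiSq N s Ω v

/-- `ω_{N-1}`: volume of the unit ball of `ℝ^{N-1}`. -/
def omegaPrev (N : ℕ) : ℝ := (volume (Metric.ball (0 : Euc (N - 1)) 1)).toReal

/-- Membership in `L²₀(Ω)`. -/
def memL20 (N : ℕ) (Ω : Set (Euc N)) (u : Euc N → ℝ) : Prop :=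
  Measurable u ∧ l2sq N Ω u < ⊤ ∧ (∫ x in Ω, u x) = 0

/-- The functional `F_s` (value `+∞` outside `H^s(Ω)`). -/
def Fs (N : ℕ) (s : ℝ) (Ω : Set (Euc N)) (u : Euc N → ℝ) : ℝ≥0∞ :=
  ENNReal.ofReal (1 - s) * minExtSemiSq N s Ω u

/-- The functional `F₁` (value `+∞` outside `H¹(Ω)`). -/
def F1 (N : ℕ) (Ω : Set (Euc N)) (u : Euc N → ℝ) : ℝ≥0∞ :=
  ENNReal.ofReal (omegaPrev N / (2 * N)) * gradSq N Ω u

end FracNeumann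
namespace FracNeumann

/-! Replacing `u ∈ H^s_{Ω,0}` outside `closure Ω` by its averages over `Ω` with weights
`|x - y|^{-(N+2s)}` produces a function whose Neumann derivative vanishes. Since a mean minimizes
the quadratic deviation, this does not increase the seminorm, and neither the `L²(Ω)` norm nor the
mean over `Ω` changes. The replacement is linear, so it carries an `n`-dimensional subspace to one
with at most the same maximal Rayleigh quotient, provided it is injective on the subspace. It fails
to be so only if the subspace contains some `u ≠ 0` vanishing on `Ω`, and then the Rayleigh quotient
of `u` is infinite. -/

section MeasureTheory

variable {α : Type*} [MeasurableSpace α] {μ : Measure α}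

/-- The level sets of `g` are translates of one another, so they all have the same measure, while
only countably many disjoint sets can have positive measure. -/
theorem measure_setOf_eq_zero_of_translate_eq_add [AddGroup α] [MeasurableAdd α] [SFinite μ]
    [μ.IsAddRightInvariant] {g : α → ℝ} (hg : Measurable g) {τ : ℝ → α}
    (hτ : ∀ y t, g (y + τ t) = g y + t) (c : ℝ) : μ {y | g y = c} = 0 := by
  have level_eq (t : ℝ) : μ {y | g y = t} = μ {y | g y = c} := by
    rw [← measure_preimage_add_right μ (τ (t - c)) {y | g y = t}]
    congr 1
    ext y
    simp only [mem_preimage, mem_ofPred_eq, hτ]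
    exact ⟨fun h => by linarith, fun h => by linarith⟩
  by_contra hne
  have hcount := Measure.countable_meas_level_set_pos (μ := μ) hg
  simp only [level_eq, pos_iff_ne_zero.2 hne, ofPred_true] at hcount
  exact Cardinal.not_countable_real hcount

theorem setLIntegral_prod_self_fst_or_snd_mem [SFinite μ] {C : Set α} (hC : MeasurableSet C)
    {F : α × α → ℝ≥0∞} (hF : Measurable F) (hsymm : ∀ x y, F (x, y) = F (y, x)) :
    ∫⁻ q in {q | q.1 ∈ C ∨ q.2 ∈ C}, F q ∂μ.prod μ =
      (∫⁻ q in C ×ˢ C, F q ∂μ.prod μ) + 2 * ∫⁻ x in Cᶜ, ∫⁻ y in C, F (x, y) ∂μ ∂μ := by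
  have hunion : {q : α × α | q.1 ∈ C ∨ q.2 ∈ C} = (C ×ˢ C ∪ Cᶜ ×ˢ C) ∪ C ×ˢ Cᶜ := by
    ext q
    simp only [mem_ofPred_eq, mem_union, mem_prod, mem_compl_iff]
    tauto
  have hdisj : Disjoint (C ×ˢ C) (Cᶜ ×ˢ C) := disjoint_prod.2 (.inl disjoint_compl_right)
  have hdisj' : Disjoint (C ×ˢ C ∪ Cᶜ ×ˢ C) (C ×ˢ Cᶜ) :=
    disjoint_union_left.2 ⟨disjoint_prod.2 (.inr disjoint_compl_right),
      disjoint_prod.2 (.inr disjoint_compl_right)⟩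
  rw [hunion, lintegral_union (hC.prod hC.compl) hdisj', lintegral_union (hC.compl.prod hC) hdisj,
    setLIntegral_prod (s := Cᶜ) _ hF.aemeasurable,
    setLIntegral_prod_symm (s := C) (t := Cᶜ) _ hF.aemeasurable, two_mul, add_assoc]
  simp only [hsymm]

theorem lintegral_average_sub_sq_le [IsFiniteMeasure μ] {u : α → ℝ}
    (hu : AEStronglyMeasurable u μ) (t : ℝ) :
    ∫⁻ y, ENNReal.ofReal ((⨍ z, u z ∂μ - u y) ^ 2) ∂μ ≤
      ∫⁻ y, ENNReal.ofReal ((t - u y) ^ 2) ∂μ := by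
  rcases eq_or_ne (∫⁻ y, ENNReal.ofReal ((t - u y) ^ 2) ∂μ) ⊤ with htop | hfin
  · exact htop ▸ le_top
  set m := ⨍ z, u z ∂μ
  have htu : MemLp (fun y => t - u y) 2 μ :=
    (memLp_two_iff_integrable_sq (by fun_prop)).2 ⟨by fun_prop,
      (hasFiniteIntegral_iff_ofReal (.of_forall fun _ => sq_nonneg _)).2 hfin.lt_top⟩
  have hu2 : MemLp u 2 μ := by
    simpa [Pi.sub_def] using (memLp_const t).sub htu
  have hmu : MemLp (fun y => m - u y) 2 μ := (memLp_const m).sub hu2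
  have hcross : Integrable (fun y => 2 * (t - m) * (m - u y)) μ :=
    (hmu.integrable one_le_two).const_mul _
  have horth : ∫ y, (m - u y) ∂μ = 0 := integral_average_sub (hu2.integrable one_le_two)
  rw [← ofReal_integral_eq_lintegral_ofReal hmu.integrable_sq (.of_forall fun _ => sq_nonneg _),
    ← ofReal_integral_eq_lintegral_ofReal htu.integrable_sq (.of_forall fun _ => sq_nonneg _)]
  refine ENNReal.ofReal_le_ofReal ?_
  calc ∫ y, (m - u y) ^ 2 ∂μ
      ≤ ∫ y, (m - u y) ^ 2 ∂μ + 2 * (t - m) * ∫ y, (m - u y) ∂μ + ∫ _, (t - m) ^ 2 ∂μ := by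
        rw [horth, mul_zero, add_zero]
        exact le_add_of_nonneg_right (integral_nonneg fun _ => sq_nonneg _)
    _ = ∫ y, ((m - u y) ^ 2 + 2 * (t - m) * (m - u y) + (t - m) ^ 2) ∂μ := by
        rw [integral_add (by exact hmu.integrable_sq.add hcross) (integrable_const _),
          integral_add hmu.integrable_sq hcross, integral_const_mul]
    _ = ∫ y, (t - u y) ^ 2 ∂μ := by
        congr 1 with y
        ring

end MeasureTheory

section LipschitzBoundary

theorem frontier_inter_subset_setOf_eq {X : Type*} [TopologicalSpace X] {S U : Set X} {f g : X → ℝ}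
    (hU : IsOpen U) (hf : Continuous f) (hg : Continuous g) (hS : ∀ y ∈ U, y ∈ S ↔ f y < g y) :
    frontier S ∩ U ⊆ {y | f y = g y} := by
  have hlocal : S ∩ U = {y | f y < g y} ∩ U := by
    ext y
    exact and_congr_left (hS y)
  rw [← frontier_inter_open_inter hU, hlocal, frontier_inter_open_inter hU]
  exact inter_subset_left.trans (frontier_lt_subset_eq hf hg)

theorem measure_graph_eq_zero {E : Type*} [NormedAddCommGroup E] [InnerProductSpace ℝ E]
    [MeasurableSpace E] [BorelSpace E] (μ : Measure E) [SFinite μ] [μ.IsAddRightInvariant] {e : E}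
    (he : ‖e‖ = 1) {f : E → ℝ} (hf : Measurable f) :
    μ {y | f (y - inner ℝ y e • e) = inner ℝ y e} = 0 := by
  have hee : inner ℝ e e = (1 : ℝ) := by rw [real_inner_self_eq_norm_sq, he, one_pow]
  have hinner : Measurable fun y : E => inner ℝ y e := by fun_prop
  have hproj : Measurable fun y : E => y - inner ℝ y e • e :=
    Continuous.measurable (by fun_prop)
  have hshift (y : E) (t : ℝ) : inner ℝ (y + t • e) e -
      f (y + t • e - inner ℝ (y + t • e) e • e) = inner ℝ y e - f (y - inner ℝ y e • e) + t := by
    have hheight : inner ℝ (y + t • e) e = inner ℝ y e + t := by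
      rw [inner_add_left, real_inner_smul_left, hee, mul_one]
    rw [hheight, show y + t • e - (inner ℝ y e + t) • e = y - inner ℝ y e • e by module]
    ring
  simpa only [Pi.sub_apply, Function.comp_apply, sub_eq_zero, @eq_comm ℝ (inner ℝ _ _)] using
    measure_setOf_eq_zero_of_translate_eq_add (μ := μ) (hinner.sub (hf.comp hproj)) hshift 0

theorem IsLipschitzDomain.volume_frontier {N : ℕ} {Ω : Set (Euc N)} (hΩ : IsLipschitzDomain N Ω) :
    volume (frontier Ω) = 0 := by
  refine measure_null_of_locally_null _ fun x hx => ?_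
  obtain ⟨e, he, r, hr, L, f, hf, hgraph⟩ := hΩ.2.2.2 x hx
  have hfc := hf.continuous
  exact ⟨frontier Ω ∩ Metric.ball x r, inter_mem_nhdsWithin _ (Metric.ball_mem_nhds x hr),
    measure_mono_null (frontier_inter_subset_setOf_eq Metric.isOpen_ball (by fun_prop)
      (by fun_prop) hgraph) (measure_graph_eq_zero volume he hfc.measurable)⟩

end LipschitzBoundary

variable {N : ℕ} {s : ℝ} {Ω : Set (Euc N)} {u : Euc N → ℝ} {x : Euc N}

theorem cNs_pos (hs : s ∈ Ioo (0 : ℝ) 1) : 0 < cNs N s := by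
  have := hs.1
  have : 0 < Real.Gamma ((N : ℝ) / 2 + s) := Real.Gamma_pos_of_pos (by positivity)
  have : 0 < Real.Gamma (1 - s) := Real.Gamma_pos_of_pos (sub_pos.2 hs.2)
  unfold cNs
  positivity

theorem kern_nonneg (x y : Euc N) : 0 ≤ kern N s x y := by unfold kern; positivity

theorem kern_pos {y : Euc N} (h : x ≠ y) : 0 < kern N s x y :=
  Real.rpow_pos_of_pos (norm_sub_pos_iff.2 h) _

theorem kern_comm (x y : Euc N) : kern N s x y = kern N s y x := by
  unfold kern; rw [norm_sub_rev]

@[fun_prop]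
theorem measurable_kern {α : Type*} [MeasurableSpace α] {f g : α → Euc N} (hf : Measurable f)
    (hg : Measurable g) : Measurable fun a => kern N s (f a) (g a) := by
  unfold kern; fun_prop

variable (N s Ω) in
/-- The measure `|x - y|^{-(N+2s)} dy` on `Ω`, against which the Neumann derivative at `x` is
taken. -/
def kernMeasure (x : Euc N) : Measure (Euc N) :=
  (volume.restrict Ω).withDensity fun y => ENNReal.ofReal (kern N s x y)⁻¹

theorem kernMeasure_absolutelyContinuous : kernMeasure N s Ω x ≪ volume.restrict Ω :=
  withDensity_absolutelyContinuous _ _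

theorem exists_kernMeasure_le_smul (hs : 0 ≤ s) (hx : x ∉ closure Ω) :
    ∃ c : ℝ≥0∞, c ≠ ⊤ ∧ kernMeasure N s Ω x ≤ c • volume.restrict Ω := by
  obtain ⟨d, hd, hball⟩ := Metric.isOpen_iff.1 isClosed_closure.isOpen_compl x hx
  refine ⟨ENNReal.ofReal (d ^ ((N : ℝ) + 2 * s))⁻¹, ENNReal.ofReal_ne_top, ?_⟩
  rw [← withDensity_const]
  refine withDensity_mono (ae_restrict_of_ae_restrict_of_subset subset_closure
    (ae_restrict_of_forall_mem isClosed_closure.measurableSet fun y hy => ?_))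
  have hdist : d ≤ ‖x - y‖ := by
    by_contra! hlt
    exact hball (mem_ball_iff_norm'.2 hlt) hy
  exact ENNReal.ofReal_le_ofReal (inv_anti₀ (Real.rpow_pos_of_pos hd _)
    (Real.rpow_le_rpow hd.le hdist (by positivity)))

theorem isFiniteMeasure_kernMeasure (hs : 0 ≤ s) (hfin : volume Ω ≠ ⊤) (hx : x ∉ closure Ω) :
    IsFiniteMeasure (kernMeasure N s Ω x) := by
  obtain ⟨c, hc, hle⟩ := exists_kernMeasure_le_smul hs hx
  have := isFiniteMeasure_restrict.2 hfin
  have := Measure.smul_finite (volume.restrict Ω) hc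
  exact isFiniteMeasure_of_le _ hle

theorem integrable_kernMeasure (hs : 0 ≤ s) (hx : x ∉ closure Ω)
    (hu : IntegrableOn u Ω) : Integrable u (kernMeasure N s Ω x) := by
  obtain ⟨c, hc, hle⟩ := exists_kernMeasure_le_smul hs hx
  exact hu.of_measure_le_smul hc hle

theorem lintegral_kernMeasure (g : Euc N → ℝ) (hg : 0 ≤ g) :
    ∫⁻ y, ENNReal.ofReal (g y) ∂kernMeasure N s Ω x =
      ∫⁻ y in Ω, ENNReal.ofReal (g y / kern N s x y) := by
  rw [kernMeasure, lintegral_withDensity_eq_lintegral_mul_non_measurable _ (by fun_prop)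
    (.of_forall fun _ => ENNReal.ofReal_lt_top)]
  refine lintegral_congr fun y => ?_
  rw [Pi.mul_apply, div_eq_mul_inv, ENNReal.ofReal_mul (hg y), mul_comm]

theorem integral_kernMeasure (g : Euc N → ℝ) :
    ∫ y, g y ∂kernMeasure N s Ω x = ∫ y in Ω, g y / kern N s x y := by
  rw [kernMeasure, integral_withDensity_eq_integral_toReal_smul (by fun_prop)
    (.of_forall fun _ => ENNReal.ofReal_lt_top)]
  refine integral_congr_ae (.of_forall fun y => ?_)
  simp only [ENNReal.toReal_ofReal (inv_nonneg.2 (kern_nonneg x y)), smul_eq_mul, div_eq_inv_mul]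

theorem measurable_integral_kernMeasure (hu : Measurable u) :
    Measurable fun x => ∫ y, u y ∂kernMeasure N s Ω x := by
  simp only [integral_kernMeasure]
  exact (StronglyMeasurable.integral_prod_right' (f := fun q : Euc N × Euc N =>
    u q.2 / kern N s q.1 q.2) (Measurable.stronglyMeasurable (by fun_prop))).measurable

theorem measurable_average_kernMeasure (hu : Measurable u) :
    Measurable fun x => ⨍ y, u y ∂kernMeasure N s Ω x := by
  have hmass : Measurable fun x => (kernMeasure N s Ω x).real univ := by
    simpa using measurable_integral_kernMeasure (N := N) (s := s) (Ω := Ω)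
      (measurable_const (a := 1))
  simp only [average_eq]
  exact hmass.inv.smul (measurable_integral_kernMeasure hu)

theorem restrict_closure_eq (hfr : volume (frontier Ω) = 0) :
    volume.restrict (closure Ω) = volume.restrict Ω :=
  Measure.restrict_congr_set (closure_ae_eq_of_null_frontier hfr)

theorem semiSq_eq_add (hfr : volume (frontier Ω) = 0) (hu : Measurable u) :
    semiSq N s Ω u =
      (∫⁻ q in closure Ω ×ˢ closure Ω,
        ENNReal.ofReal ((u q.1 - u q.2) ^ 2 / kern N s q.1 q.2)) +
      2 * ∫⁻ x in (closure Ω)ᶜ, ∫⁻ y in Ω, ENNReal.ofReal ((u x - u y) ^ 2 / kern N s x y) := by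
  have hsplit := setLIntegral_prod_self_fst_or_snd_mem (μ := (volume : Measure (Euc N)))
    (F := fun q => ENNReal.ofReal ((u q.1 - u q.2) ^ 2 / kern N s q.1 q.2))
    isClosed_closure.measurableSet (C := closure Ω) (by fun_prop)
    fun x y => by rw [kern_comm, sub_sq_comm]
  rwa [restrict_closure_eq hfr] at hsplit

theorem ae_eq_zero_of_semiSq_eq_zero (hpos : volume Ω ≠ 0) (hfr : volume (frontier Ω) = 0)
    (hu : Measurable u) (huΩ : u =ᵐ[volume.restrict Ω] 0) (hsemi : semiSq N s Ω u = 0) :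
    u =ᵐ[volume] 0 := by
  have hC : MeasurableSet (closure Ω) := isClosed_closure.measurableSet
  have hΩC : ∀ᵐ y ∂volume.restrict Ω, y ∈ closure Ω :=
    ae_restrict_of_ae_restrict_of_subset subset_closure (ae_restrict_mem hC)
  have hnebot : (ae (volume.restrict Ω)).NeBot := by
    rwa [ae_neBot, Ne, Measure.restrict_eq_zero]
  rw [semiSq_eq_add hfr hu, add_eq_zero, mul_eq_zero_iff_left two_ne_zero] at hsemi
  have hmeas : Measurable fun q : Euc N × Euc N =>
      ENNReal.ofReal ((u q.1 - u q.2) ^ 2 / kern N s q.1 q.2) := by fun_prop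
  have hout := (lintegral_eq_zero_iff hmeas.lintegral_prod_right').1 hsemi.2
  refine ae_of_ae_restrict_of_ae_restrict_compl (closure Ω) (by rwa [restrict_closure_eq hfr]) ?_
  filter_upwards [hout, ae_restrict_mem hC.compl] with x hx hxC
  have hx' := (lintegral_eq_zero_iff (by fun_prop)).1 hx
  obtain ⟨y, hxy, huy, hyC⟩ := (hx'.and (huΩ.and hΩC)).exists
  have hk : 0 < kern N s x y := kern_pos fun h => hxC (h ▸ hyC)
  have hle : (u x - u y) ^ 2 / kern N s x y ≤ 0 := ENNReal.ofReal_eq_zero.1 hxy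
  rw [huy, Pi.zero_apply, sub_zero] at hle
  have hsq : u x ^ 2 ≤ 0 := by simpa using (div_le_iff₀ hk).1 hle
  exact pow_eq_zero_iff two_ne_zero |>.1 (le_antisymm hsq (sq_nonneg _))

theorem integrableOn_of_l2sq_lt_top (hfin : volume Ω ≠ ⊤) (hu : Measurable u)
    (h2 : l2sq N Ω u < ⊤) : IntegrableOn u Ω := by
  have := isFiniteMeasure_restrict.2 hfin
  have hsq : Integrable (fun y => u y ^ 2) (volume.restrict Ω) :=
    ⟨by fun_prop, (hasFiniteIntegral_iff_ofReal (.of_forall fun _ => sq_nonneg _)).2 h2⟩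
  exact ((memLp_two_iff_integrable_sq hu.aestronglyMeasurable).2 hsq).integrable one_le_two

theorem l2sq_congr {v : Euc N → ℝ} (h : u =ᵐ[volume.restrict Ω] v) : l2sq N Ω u = l2sq N Ω v :=
  lintegral_congr_ae (h.mono fun y hy => by simp only [hy])

theorem rayleighS_eq_top (hs : s ∈ Ioo (0 : ℝ) 1) (huΩ : u =ᵐ[volume.restrict Ω] 0)
    (hsemi : semiSq N s Ω u ≠ 0) : rayleighS N s Ω u = ⊤ := by
  have hl2 : l2sq N Ω u = 0 := by simpa [l2sq] using l2sq_congr huΩ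
  have hc : ENNReal.ofReal (cNs N s / 2) ≠ 0 :=
    (ENNReal.ofReal_pos.2 (half_pos (cNs_pos hs))).ne'
  rw [rayleighS, hl2, ENNReal.div_zero (mul_ne_zero hc hsemi)]

variable (N s Ω) in
open Classical in
/-- The `s`-minimal extension of `u|_Ω`, given outside `closure Ω` by the averages that make its
Neumann derivative vanish. On `frontier Ω`, which is null in the applications, `u` is kept. -/
def minExt (u : Euc N → ℝ) : Euc N → ℝ :=
  (closure Ω).piecewise u fun x => ⨍ y, u y ∂kernMeasure N s Ω x

theorem minExt_of_mem (hx : x ∈ closure Ω) : minExt N s Ω u x = u x := by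
  classical exact piecewise_eq_of_mem _ _ _ hx

theorem minExt_of_notMem (hx : x ∉ closure Ω) :
    minExt N s Ω u x = ⨍ y, u y ∂kernMeasure N s Ω x := by
  classical exact piecewise_eq_of_notMem _ _ _ hx

theorem minExt_ae_eq : minExt N s Ω u =ᵐ[volume.restrict Ω] u :=
  ae_restrict_of_ae_restrict_of_subset subset_closure
    (ae_restrict_of_forall_mem isClosed_closure.measurableSet fun _ => minExt_of_mem)

theorem measurable_minExt (hu : Measurable u) : Measurable (minExt N s Ω u) := by
  classical
  exact hu.piecewise isClosed_closure.measurableSet (measurable_average_kernMeasure hu)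

theorem Nneu_minExt (hs : 0 ≤ s) (hfin : volume Ω ≠ ⊤) (hu : IntegrableOn u Ω)
    (hx : x ∉ closure Ω) : Nneu N s Ω (minExt N s Ω u) x = 0 := by
  have := isFiniteMeasure_kernMeasure hs hfin hx
  have hae : minExt N s Ω u =ᵐ[kernMeasure N s Ω x] u :=
    kernMeasure_absolutelyContinuous.ae_le minExt_ae_eq
  rw [Nneu, ← integral_kernMeasure, minExt_of_notMem hx,
    integral_congr_ae (hae.mono fun y hy => by rw [hy]),
    integral_average_sub (integrable_kernMeasure hs hx hu), mul_zero]

theorem semiSq_minExt_le (hs : 0 ≤ s) (hfin : volume Ω ≠ ⊤) (hfr : volume (frontier Ω) = 0)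
    (hu : Measurable u) : semiSq N s Ω (minExt N s Ω u) ≤ semiSq N s Ω u := by
  have hC : MeasurableSet (closure Ω) := isClosed_closure.measurableSet
  rw [semiSq_eq_add hfr hu, semiSq_eq_add hfr (measurable_minExt hu)]
  gcongr ?_ + 2 * ?_
  · refine setLIntegral_mono' (hC.prod hC) fun q hq => ?_
    rw [minExt_of_mem hq.1, minExt_of_mem hq.2]
  · refine setLIntegral_mono' hC.compl fun x hx => ?_
    have := isFiniteMeasure_kernMeasure hs hfin hx
    calc ∫⁻ y in Ω, ENNReal.ofReal ((minExt N s Ω u x - minExt N s Ω u y) ^ 2 / kern N s x y)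
        = ∫⁻ y in Ω, ENNReal.ofReal ((⨍ z, u z ∂kernMeasure N s Ω x - u y) ^ 2 / kern N s x y) :=
          lintegral_congr_ae (minExt_ae_eq.mono fun y (hy : minExt N s Ω u y = u y) => by
            simp only [hy, minExt_of_notMem hx])
      _ ≤ ∫⁻ y in Ω, ENNReal.ofReal ((u x - u y) ^ 2 / kern N s x y) := by
          rw [← lintegral_kernMeasure _ fun _ => sq_nonneg _,
            ← lintegral_kernMeasure _ fun _ => sq_nonneg _]
          exact lintegral_average_sub_sq_le hu.aestronglyMeasurable _

theorem memHsTilde_minExt (hs : 0 ≤ s) (hfin : volume Ω ≠ ⊤) (hfr : volume (frontier Ω) = 0)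
    (hu : memHs N s Ω u) : memHsTilde N s Ω (minExt N s Ω u) := by
  obtain ⟨hmeas, hl2, hsemi⟩ := hu
  refine ⟨⟨measurable_minExt hmeas, (l2sq_congr minExt_ae_eq).trans_lt hl2,
    (semiSq_minExt_le hs hfin hfr hmeas).trans_lt hsemi⟩, ?_⟩
  exact ae_restrict_of_forall_mem isClosed_closure.measurableSet.compl fun x hx =>
    Nneu_minExt hs hfin (integrableOn_of_l2sq_lt_top hfin hmeas hl2) hx

theorem rayleighS_minExt_le (hs : 0 ≤ s) (hfin : volume Ω ≠ ⊤) (hfr : volume (frontier Ω) = 0)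
    (hu : Measurable u) : rayleighS N s Ω (minExt N s Ω u) ≤ rayleighS N s Ω u := by
  unfold rayleighS
  rw [l2sq_congr minExt_ae_eq]
  gcongr
  exact semiSq_minExt_le hs hfin hfr hu

/-- The minimal extension as a linear map. Its domain consists of functions integrable over `Ω`,
since Bochner averages are not additive in general. -/
def minExtₗ (hs : 0 ≤ s) (A : Submodule ℝ (Euc N → ℝ)) (hA : ∀ u ∈ A, IntegrableOn u Ω) :
    A →ₗ[ℝ] Euc N → ℝ where
  toFun u := minExt N s Ω u
  map_add' u v := by
    ext x
    by_cases hx : x ∈ closure Ω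
    · simp only [minExt_of_mem hx, Pi.add_apply, Submodule.coe_add]
    · have hu := (integrable_kernMeasure hs hx (hA u u.2)).to_average
      have hv := (integrable_kernMeasure hs hx (hA v v.2)).to_average
      simp only [minExt_of_notMem hx, Pi.add_apply, Submodule.coe_add]
      exact integral_add hu hv
  map_smul' c u := by
    ext x
    by_cases hx : x ∈ closure Ω
    · simp only [minExt_of_mem hx, Pi.smul_apply, Submodule.coe_smul, RingHom.id_apply]
    · simp only [minExt_of_notMem hx, Pi.smul_apply, Submodule.coe_smul, RingHom.id_apply]
      exact integral_smul c _

theorem muNs_le_muNsTilde (n : ℕ) : muNs N s Ω n ≤ muNsTilde N s Ω n :=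
  le_iInf₂ fun A hA => iInf₂_le A
    ⟨hA.1, fun u hu => ⟨(hA.2.1 u hu).1.1, (hA.2.1 u hu).2⟩, hA.2.2⟩

theorem muNsTilde_finrank_le_iSup_rayleighS (hs : 0 ≤ s) (hfin : volume Ω ≠ ⊤)
    (hfr : volume (frontier Ω) = 0) {A : Submodule ℝ (Euc N → ℝ)}
    (hA : ∀ u ∈ A, memHs N s Ω u ∧ ∫ x in Ω, u x = 0)
    (hinj : ∀ u ∈ A, u =ᵐ[volume.restrict Ω] 0 → u = 0) :
    muNsTilde N s Ω (Module.finrank ℝ A) ≤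
      ⨆ (u : Euc N → ℝ) (_ : u ∈ A ∧ u ≠ 0), rayleighS N s Ω u := by
  let T := minExtₗ hs A fun u hu =>
    integrableOn_of_l2sq_lt_top hfin (hA u hu).1.1 (hA u hu).1.2.1
  have hT (u : A) (hu : T u =ᵐ[volume] 0) : u = 0 :=
    Subtype.ext (hinj u u.2 (minExt_ae_eq.symm.trans (ae_restrict_of_ae hu)))
  have hTinj : Function.Injective T :=
    (injective_iff_map_eq_zero T).2 fun u hu => hT u (.of_eq hu)
  refine iInf₂_le_of_le (LinearMap.range T) ⟨LinearMap.finrank_range_of_inj hTinj, ?_, ?_⟩ ?_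
  · rintro _ ⟨u, rfl⟩
    exact ⟨memHsTilde_minExt hs hfin hfr (hA u u.2).1,
      (integral_congr_ae minExt_ae_eq).trans (hA u u.2).2⟩
  · rintro _ ⟨u, rfl⟩ hu
    rw [hT u hu, map_zero]
  · refine iSup₂_le ?_
    rintro _ ⟨⟨u, rfl⟩, hne⟩
    have hu : (u : Euc N → ℝ) ≠ 0 := fun h => hne (by rw [show u = 0 from Subtype.ext h, map_zero])
    exact le_iSup₂_of_le (u : Euc N → ℝ) ⟨u.2, hu⟩
      (rayleighS_minExt_le hs hfin hfr (hA u u.2).1.1)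

theorem statement4_general (hs : s ∈ Ioo (0 : ℝ) 1) (hpos : volume Ω ≠ 0) (hfin : volume Ω ≠ ⊤)
    (hfr : volume (frontier Ω) = 0) (n : ℕ) : muNsTilde N s Ω n = muNs N s Ω n := by
  refine le_antisymm (le_iInf₂ ?_) (muNs_le_muNsTilde n)
  rintro A ⟨rfl, hA, hAz⟩
  by_cases hinj : ∀ u ∈ A, u =ᵐ[volume.restrict Ω] 0 → u = 0
  · exact muNsTilde_finrank_le_iSup_rayleighS hs.1.le hfin hfr hA hinj
  · push Not at hinj
    obtain ⟨u, huA, huΩ, hu⟩ := hinj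
    have hsemi : semiSq N s Ω u ≠ 0 := fun h =>
      hu (hAz u huA (ae_eq_zero_of_semiSq_eq_zero hpos hfr (hA u huA).1.1 huΩ h))
    exact le_iSup₂_of_le u ⟨huA, hu⟩ (rayleighS_eq_top hs huΩ hsemi ▸ le_top)

/-- Proposition 2.7: the min-max values over `n`-dimensional subspaces of
`H̃^s_{Ω,0} ∩ L²₀(Ω)` coincide with those over `n`-dimensional subspaces of
`H^s_{Ω,0} ∩ L²₀(Ω)`. -/
theorem statement4 (N : ℕ) (hN : 2 ≤ N) (s : ℝ) (hs : s ∈ Set.Ioo (0 : ℝ) 1)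
    (Ω : Set (Euc N)) (hΩ : IsLipschitzDomain N Ω) (n : ℕ) (hn : 1 ≤ n) :
    muNsTilde N s Ω n = muNs N s Ω n :=
  statement4_general hs (hΩ.1.measure_pos volume hΩ.2.2.1.nonempty).ne' hΩ.2.1.measure_lt_top.ne
    hΩ.volume_frontier n

end FracNeumann
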